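/- arXiv:2311.03077 — 8 statements merged into one kernel-verified Lean document; each statement's English description precedes it below -/
import Mathlib

section
/- Let R be a commutative ring, let n > 0, let f = tⁿ + a_{n−1}t^{n−1} + … + a₀ ∈ R[t] be a monic polynomial of degree n, and let g = b_m t^m + … + b₀ ∈ R[t] be an arbitrary polynomial of degree at most m. If f and g generate the unit ideal of R[t], then the resultant Res_{n,m}(f,g) ∈ R, defined as the determinant of the (n+m)×(n+m) Sylvester matrix of f and g, is a unit of R. -/
/-- The `(n+m) × (n+m)` Sylvester matrix of two polynomials `f` (with coefficient sequence
`a_n, …, a_0`) and `g` (with coefficient sequence `b_m, …, b_0`): the first `m` rows contain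
the shifted coefficient sequences of `f` and the last `n` rows the shifted coefficient
sequences of `g`. -/
def sylvesterMatrix {R : Type*} [CommRing R] (n m : ℕ) (f g : Polynomial R) :
    Matrix (Fin (n + m)) (Fin (n + m)) R :=
  Matrix.of fun i j =>
    if (i : ℕ) < m then
      (if (i : ℕ) ≤ (j : ℕ) ∧ (j : ℕ) ≤ (i : ℕ) + n then
        f.coeff (n - ((j : ℕ) - (i : ℕ))) else 0)
    else
      (if (i : ℕ) - m ≤ (j : ℕ) ∧ (j : ℕ) ≤ ((i : ℕ) - m) + m then
        g.coeff (m - ((j : ℕ) - ((i : ℕ) - m))) else 0)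

open Polynomial in
theorem sylvesterMatrix_eq_aux {R : Type*} [CommRing R] (n m : ℕ) (f g : Polynomial R) :
    sylvesterMatrix n m f g
      = ((Polynomial.sylvester f g n m).submatrix Fin.revPerm Fin.revPerm).transpose := by
  ext i j
  obtain ⟨k, rfl⟩ : ∃ k, i = Fin.rev k := ⟨Fin.rev i, by simp⟩
  obtain ⟨l, rfl⟩ : ∃ l, j = Fin.rev l := ⟨Fin.rev j, by simp⟩
  simp only [Matrix.transpose_apply, Matrix.submatrix_apply, Fin.revPerm_apply, Fin.rev_rev]
  have hl := l.2
  induction k using Fin.addCases with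
  | left k =>
    have hk := k.2
    simp only [sylvesterMatrix, Polynomial.sylvester, Matrix.of_apply, Fin.addCases_left,
      Fin.val_rev, Fin.val_castAdd, Set.mem_Icc]
    rw [if_neg (by omega)]
    split_ifs
    · congr 1; omega
    · omega
    · omega
    · rfl
  | right k =>
    have hk := k.2
    simp only [sylvesterMatrix, Polynomial.sylvester, Matrix.of_apply, Fin.addCases_right,
      Fin.val_rev, Fin.val_natAdd, Set.mem_Icc]
    rw [if_pos (by omega)]
    split_ifs
    · congr 1; omega
    · omega
    · omega
    · rfl

/-- If `f` is monic of degree `n > 0` and `g` has degree at most `m`, and `f` and `g` generate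
the unit ideal of `R[t]`, then the resultant `Res_{n,m}(f,g)`, i.e. the determinant of the
Sylvester matrix, is a unit of `R`. -/
theorem stmt3 (R : Type*) [CommRing R] (n m : ℕ) (hn : 0 < n)
    (f g : Polynomial R) (hf : f.Monic) (hfdeg : f.natDegree = n)
    (hgdeg : g.natDegree ≤ m) (hcop : IsCoprime f g) :
    IsUnit (sylvesterMatrix n m f g).det := by
  rw [sylvesterMatrix_eq_aux, Matrix.det_transpose, Matrix.det_submatrix_equiv_self]
  change IsUnit (Polynomial.resultant f g n m)
  obtain ⟨k, rfl⟩ := Nat.exists_eq_add_of_le hgdeg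
  subst hfdeg
  rw [Polynomial.resultant_add_right_deg _ _ _ _ _ le_rfl, hf.coeff_natDegree, one_pow, one_mul]
  exact (Polynomial.isUnit_resultant_iff_isCoprime hf).2 hcop
end

section
/- Let R be a commutative ring and I ⊆ R an ideal. The following are equivalent: (i) (R, I) is a henselian pair; (ii) I is contained in the Jacobson radical of R and for every monic polynomial of the form f(t) = tⁿ(t−1) + a_n tⁿ + … + a₁ t + a₀ with a₀,…,a_n ∈ I there exists α ∈ 1 + I with f(α) = 0; (iii) I is contained in the Jacobson radical of R and every N-polynomial over (R, I) has a root lying in I. -/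
open Polynomial

theorem gabber_to_N {R : Type*} [CommRing R] (I : Ideal R)
    (hJ : I ≤ (⊥ : Ideal R).jacobson)
    (H : ∀ (n : ℕ) (a : ℕ → R), (∀ i ≤ n, a i ∈ I) →
        ∃ α : R, α - 1 ∈ I ∧
          (X ^ n * (X - 1) + ∑ i ∈ Finset.range (n + 1), C (a i) * X ^ i : R[X]).IsRoot α)
    (f : R[X]) (h0 : f.coeff 0 ∈ I)
    (h1 : IsUnit (Ideal.Quotient.mk I (f.coeff 1))) : ∃ α ∈ I, f.IsRoot α := by
  have hloc := isLocalHom_of_le_jacobson_bot I hJ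
  obtain ⟨u, hu⟩ := isUnit_iff_exists_inv.mp (IsUnit.of_map (Ideal.Quotient.mk I) _ h1)
  set m := f.natDegree with hm
  set c := f.coeff with hc
  obtain ⟨α, hα, hr⟩ := H m
    (fun j => if j < m then c (m + 1 - j) * (-1) ^ (m + 1 - j) * c 0 ^ (m - j) * u ^ (m + 1 - j)
      else 0) (by
      intro j _
      split_ifs with h
      · exact I.mul_mem_right _ (I.mul_mem_left _ (I.pow_mem_of_mem h0 _ (by omega)))
      · exact I.zero_mem)
  have hαu : IsUnit α := by
    apply IsUnit.of_map (Ideal.Quotient.mk I)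
    rw [(Ideal.Quotient.eq (I := I)).mpr hα, map_one]
    exact isUnit_one
  obtain ⟨v, hv⟩ := isUnit_iff_exists_inv.mp hαu
  refine ⟨-(c 0 * u * v), I.neg_mem (I.mul_mem_right _ (I.mul_mem_right _ h0)), ?_⟩
  have hr' : α ^ m * (α - 1) + ∑ i ∈ Finset.range m,
      c (i + 2) * (-1) ^ (i + 2) * c 0 ^ (i + 1) * u ^ (i + 2) * α ^ (m - 1 - i) = 0 := by
    rw [IsRoot.def, eval_add, eval_finsetSum, Finset.sum_range_succ,
      ← Finset.sum_range_reflect] at hr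
    simp only [eval_mul, eval_pow, eval_X, eval_sub, eval_one, eval_C, lt_irrefl, if_false,
      zero_mul, add_zero] at hr
    rw [← hr]
    congr 1
    apply Finset.sum_congr rfl
    intro i hi
    have hi := Finset.mem_range.mp hi
    rw [if_pos (by omega), show m + 1 - (m - 1 - i) = i + 2 by omega,
      show m - (m - 1 - i) = i + 1 by omega]
  have hpow : ∀ k, α ^ k * v ^ k = 1 := fun k => by rw [← mul_pow, hv, one_pow]
  rw [IsRoot.def, eval_eq_sum_range' (show f.natDegree < m + 2 by omega),
    Finset.sum_range_succ', Finset.sum_range_succ']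
  have key := congrArg (fun z => c 0 * v ^ (m + 1) * z) hr'
  simp only [mul_add, mul_zero, Finset.mul_sum] at key
  rw [← key, add_comm (∑ i ∈ Finset.range m, _) _, add_right_comm, add_comm]
  rw [add_comm]
  congr 1
  · have := hpow m
    simp only [← hc]
    linear_combination (-(c 0 * v)) * hu - c 0 * (v * α - v) * this - c 0 * hv
  · apply Finset.sum_congr rfl
    intro i hi
    have hi := Finset.mem_range.mp hi
    obtain ⟨k, hk⟩ : ∃ k, m = i + 1 + k := ⟨m - 1 - i, by omega⟩
    have := hpow k
    rw [show m - 1 - i = k by omega, hk, neg_eq_neg_one_mul]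
    simp only [← hc, mul_pow]
    linear_combination (-(c (i+2) * (-1) ^ (i+2) * c 0 ^ (i+2) * u ^ (i+2) * v ^ (i+2))) * this

/-- Characterizations of henselian pairs: `(R, I)` is a henselian pair iff `I` is contained in
the Jacobson radical and every monic polynomial of the form `tⁿ(t−1) + aₙtⁿ + … + a₁t + a₀`
with all `aᵢ ∈ I` has a root in `1 + I`, iff `I` is contained in the Jacobson radical and every
N-polynomial over `(R, I)` (a monic polynomial with constant coefficient in `I` and degree-one
coefficient a unit modulo `I`) has a root in `I`. -/
theorem stmt4 (R : Type*) [CommRing R] (I : Ideal R) :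
    List.TFAE [
      HenselianRing R I,
      I ≤ (⊥ : Ideal R).jacobson ∧ ∀ (n : ℕ) (a : ℕ → R), (∀ i ≤ n, a i ∈ I) →
        ∃ α : R, α - 1 ∈ I ∧
          (X ^ n * (X - 1) + ∑ i ∈ Finset.range (n + 1), C (a i) * X ^ i).IsRoot α,
      I ≤ (⊥ : Ideal R).jacobson ∧ ∀ f : Polynomial R, f.Monic → f.coeff 0 ∈ I →
        IsUnit (Ideal.Quotient.mk I (f.coeff 1)) → ∃ α ∈ I, f.IsRoot α ] := by
  tfae_have 1 → 2
  | h => by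
    refine ⟨h.jac, fun n a ha => ?_⟩
    have hlt : (∑ i ∈ Finset.range (n + 1), C (a i) * X ^ i : R[X]).degree < (n + 1 : ℕ) := by
      rw [← mem_degreeLT]
      refine Submodule.sum_mem _ fun i hi => ?_
      rw [mem_degreeLT]
      exact (degree_C_mul_X_pow_le _ _).trans_lt (by exact_mod_cast Finset.mem_range.mp hi)
    obtain ⟨α, h1, h2⟩ := h.is_henselian
      (X ^ n * (X - 1) + ∑ i ∈ Finset.range (n + 1), C (a i) * X ^ i) (by
        nontriviality R
        have hm : (X ^ n * (X - 1) : R[X]).Monic := (monic_X_pow n).mul (monic_X_sub_C 1)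
        refine hm.add_of_left (hlt.trans_le ?_)
        rw [← C_1, (monic_X_sub_C (1 : R)).degree_mul, degree_X_pow, degree_X_sub_C]
        norm_cast) 1 (by
        simp only [eval_add, eval_mul, eval_pow, eval_X, eval_sub, eval_one, sub_self, mul_zero,
          zero_add, eval_finsetSum, eval_C, one_pow, mul_one]
        exact I.sum_mem fun i hi => ha i (Nat.lt_succ_iff.mp (Finset.mem_range.mp hi))) (by
        convert isUnit_one
        rw [← map_one (Ideal.Quotient.mk I), Ideal.Quotient.eq]
        simp only [derivative_add, derivative_mul, derivative_sum, derivative_sub, derivative_X,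
          derivative_one, derivative_C, derivative_X_pow, eval_add, eval_mul, eval_pow, eval_X,
          eval_sub, eval_one, eval_finsetSum, eval_C, one_pow, mul_one, sub_self, mul_zero,
          zero_add, sub_zero, zero_mul, eval_zero, add_sub_cancel_left]
        exact I.sum_mem fun i hi => I.mul_mem_right _
          (ha i (Nat.lt_succ_iff.mp (Finset.mem_range.mp hi))))
    exact ⟨α, h2, h1⟩
  tfae_have 2 → 3
  | ⟨hJ, H⟩ => ⟨hJ, fun f _ h0 h1 => gabber_to_N I hJ H f h0 h1⟩
  tfae_have 3 → 1
  | ⟨hJ, H⟩ => by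
    refine ⟨hJ, fun f hf a h0 h1 => ?_⟩
    obtain ⟨b, hb, hr⟩ := H (taylor a f) (by rw [Monic, leadingCoeff_taylor]; exact hf) (by rwa [taylor_coeff_zero])
      (by rwa [taylor_coeff_one])
    refine ⟨b + a, ?_, by simpa using hb⟩
    rwa [IsRoot.def, taylor_eval] at hr
  tfae_finish
end

section
/- Let φ : A → B be a homomorphism of commutative rings and let f, g ∈ A. (1) If the induced maps A/f → B/φ(f) and A/g → B/φ(g) are surjective, then the induced map A/fg → B/φ(fg) is surjective. (2) Let S ⊆ A be a multiplicatively closed set containing f and g, let I = ker(λ_S : A → A_S) and J = ker(λ_{φ(S)} : B → B_{φ(S)}); if φ restricts to a bijection I → J and the induced maps A/f → B/φ(f) and A/g → B/φ(g) are injective, then the induced map A/fg → B/φ(fg) is injective. -/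
/-- For a ring homomorphism `φ : A → B` and `f ∈ A`, the induced homomorphism
`A/(f) → B/(φ f)` on quotients. -/
def inducedQuotMap {A B : Type*} [CommRing A] [CommRing B] (φ : A →+* B) (f : A) :
    A ⧸ Ideal.span {f} →+* B ⧸ Ideal.span {φ f} :=
  Ideal.quotientMap (Ideal.span {φ f}) φ
    (by rw [← Ideal.map_le_iff_le_comap, Ideal.map_span, Set.image_singleton])

theorem surj_aux {A B : Type*} [CommRing A] [CommRing B] (φ : A →+* B) (f : A) :
    Function.Surjective (inducedQuotMap φ f) ↔ ∀ b, ∃ a c, b = φ a + φ f * c := by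
  constructor
  · intro h b
    obtain ⟨x, hx⟩ := h (Ideal.Quotient.mk _ b)
    obtain ⟨a, rfl⟩ := Ideal.Quotient.mk_surjective x
    have h2 : Ideal.Quotient.mk (Ideal.span {φ f}) (φ a) = Ideal.Quotient.mk _ b := hx
    have h3 := (Ideal.Quotient.eq.1 h2.symm)
    obtain ⟨c, hc⟩ := Ideal.mem_span_singleton.1 h3
    exact ⟨a, c, by rw [← hc]; ring⟩
  · intro h y
    obtain ⟨b, rfl⟩ := Ideal.Quotient.mk_surjective y
    obtain ⟨a, c, hc⟩ := h b
    refine ⟨Ideal.Quotient.mk _ a, ?_⟩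
    change Ideal.Quotient.mk (Ideal.span {φ f}) (φ a) = Ideal.Quotient.mk _ b
    refine (Ideal.Quotient.eq.2 (Ideal.mem_span_singleton.2 ⟨c, ?_⟩)).symm
    rw [hc]; ring

theorem inj_aux {A B : Type*} [CommRing A] [CommRing B] (φ : A →+* B) (f : A) :
    Function.Injective (inducedQuotMap φ f) ↔ ∀ a, φ f ∣ φ a → f ∣ a := by
  rw [injective_iff_map_eq_zero]
  constructor
  · intro h a ha
    have h2 : Ideal.Quotient.mk (Ideal.span {φ f}) (φ a) = 0 :=
      Ideal.Quotient.eq_zero_iff_mem.2 (Ideal.mem_span_singleton.2 ha)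
    exact Ideal.mem_span_singleton.1
      (Ideal.Quotient.eq_zero_iff_mem.1 (h (Ideal.Quotient.mk _ a) h2))
  · intro h x hx
    obtain ⟨a, rfl⟩ := Ideal.Quotient.mk_surjective x
    have h2 : Ideal.Quotient.mk (Ideal.span {φ f}) (φ a) = 0 := hx
    exact Ideal.Quotient.eq_zero_iff_mem.2 (Ideal.mem_span_singleton.2
      (h a (Ideal.mem_span_singleton.1 (Ideal.Quotient.eq_zero_iff_mem.1 h2))))

/-- (1) If the induced maps `A/f → B/φ(f)` and `A/g → B/φ(g)` are surjective, then so is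
`A/fg → B/φ(fg)`.  (2) If `φ` restricts to a bijection between the kernels of the localization
maps `A → A_S` and `B → B_{φ(S)}` for a multiplicative set `S` containing `f` and `g`, and the
induced maps `A/f → B/φ(f)` and `A/g → B/φ(g)` are injective, then `A/fg → B/φ(fg)` is
injective. -/
theorem stmt6 {A B : Type*} [CommRing A] [CommRing B] (φ : A →+* B) (f g : A) :
    (Function.Surjective (inducedQuotMap φ f) → Function.Surjective (inducedQuotMap φ g) →
      Function.Surjective (inducedQuotMap φ (f * g))) ∧
    (∀ S : Submonoid A, f ∈ S → g ∈ S →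
      Set.BijOn (⇑φ) (RingHom.ker (algebraMap A (Localization S)) : Set A)
        (RingHom.ker (algebraMap B (Localization (S.map φ))) : Set B) →
      Function.Injective (inducedQuotMap φ f) → Function.Injective (inducedQuotMap φ g) →
      Function.Injective (inducedQuotMap φ (f * g))) := by
  rw [surj_aux, surj_aux, surj_aux, inj_aux, inj_aux, inj_aux]
  constructor
  · intro hf hg b
    obtain ⟨a, b1, rfl⟩ := hf b
    obtain ⟨a1, b2, rfl⟩ := hg b1
    exact ⟨a + f * a1, b2, by simp only [map_add, map_mul]; ring⟩
  · rintro S hfS hgS hbij hf hg a ⟨b, hb⟩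
    rw [map_mul] at hb
    obtain ⟨a', rfl⟩ := hf a ⟨φ g * b, by rw [hb]; ring⟩
    rw [map_mul] at hb
    have hJ : φ a' - φ g * b ∈
        (RingHom.ker (algebraMap B (Localization (S.map φ))) : Set B) := by
      rw [SetLike.mem_coe, RingHom.mem_ker, IsLocalization.map_eq_zero_iff (S.map φ)]
      exact ⟨⟨φ f, S.mem_map_of_mem φ hfS⟩, by simp only [mul_sub, hb]; ring⟩
    obtain ⟨i, hi, hic⟩ := hbij.surjOn hJ
    obtain ⟨a'', ha⟩ := hg (a' - i) ⟨b, by rw [map_sub, hic]; ring⟩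
    have h0 : f * i = 0 := by
      refine hbij.injOn (Ideal.mul_mem_left _ f hi) (Ideal.zero_mem _) ?_
      rw [map_mul, hic, map_zero, mul_sub, hb]; ring
    exact ⟨a'', by linear_combination f * ha + h0⟩
end

section
/- Let φ : A → B be a homomorphism of commutative rings, let S ⊆ A be a multiplicatively closed set generated by a subset G ⊆ S, and suppose that every element of S is a nonzerodivisor in A and every element of φ(S) is a nonzerodivisor in B. If the induced map A/g → B/φ(g) is an isomorphism for every g ∈ G, then φ is an analytic isomorphism along S. -/
/-- The induced homomorphism `φ_S : A_S → B_{φ(S)}` on localizations. -/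
noncomputable def inducedLocMap {A B : Type*} [CommRing A] [CommRing B]
    (φ : A →+* B) (S : Submonoid A) :
    Localization S →+* Localization (S.map φ) :=
  IsLocalization.map (Localization (S.map φ)) φ (Submonoid.le_comap_map S)

/-- `φ : A → B` is an analytic isomorphism along the multiplicative set `S ⊆ A` if the induced
maps `A/s → B/φ(s)` are isomorphisms for all `s ∈ S` and the square formed by `φ`, the two
localization maps, and `φ_S : A_S → B_{φ(S)}` is a pullback square of commutative rings. -/
def IsAnalyticIsoAlong {A B : Type*} [CommRing A] [CommRing B]
    (φ : A →+* B) (S : Submonoid A) : Prop :=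
  (∀ s ∈ S, Function.Bijective (inducedQuotMap φ s)) ∧
  ∀ (a : Localization S) (b : B),
    inducedLocMap φ S a = algebraMap B (Localization (S.map φ)) b →
    ∃! x : A, algebraMap A (Localization S) x = a ∧ φ x = b

/-- Elementwise form of bijectivity of the induced map on quotients. -/
theorem inducedQuotMap_bijective_iff {A B : Type*} [CommRing A] [CommRing B] (φ : A →+* B)
    (f : A) : Function.Bijective (inducedQuotMap φ f) ↔
      (∀ x, φ f ∣ φ x → f ∣ x) ∧ (∀ b, ∃ a, φ f ∣ b - φ a) := by
  have hmk : ∀ x, inducedQuotMap φ f (Ideal.Quotient.mk _ x) = Ideal.Quotient.mk _ (φ x) :=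
    fun x => rfl
  constructor
  · rintro ⟨hi, hs⟩
    refine ⟨fun x hx => ?_, fun b => ?_⟩
    · rw [← Ideal.mem_span_singleton, ← Ideal.Quotient.eq_zero_iff_mem]
      apply hi
      rw [hmk, map_zero, Ideal.Quotient.eq_zero_iff_mem, Ideal.mem_span_singleton]
      exact hx
    · obtain ⟨a, ha⟩ := hs (Ideal.Quotient.mk _ b)
      obtain ⟨a, rfl⟩ := Ideal.Quotient.mk_surjective a
      refine ⟨a, ?_⟩
      rw [← Ideal.mem_span_singleton, ← Ideal.Quotient.eq]
      rw [← ha, hmk]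
  · rintro ⟨hi, hs⟩
    refine ⟨(injective_iff_map_eq_zero _).2 fun x hx => ?_, fun b => ?_⟩
    · obtain ⟨x, rfl⟩ := Ideal.Quotient.mk_surjective x
      rw [hmk, Ideal.Quotient.eq_zero_iff_mem, Ideal.mem_span_singleton] at hx
      rw [Ideal.Quotient.eq_zero_iff_mem, Ideal.mem_span_singleton]
      exact hi x hx
    · obtain ⟨b, rfl⟩ := Ideal.Quotient.mk_surjective b
      obtain ⟨a, ha⟩ := hs b
      refine ⟨Ideal.Quotient.mk _ a, ?_⟩
      rw [hmk]
      exact (Ideal.Quotient.eq.2 (Ideal.mem_span_singleton.2 ha)).symm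

/-- If a multiplicative set `S` is generated by `G`, all elements of `S` are nonzerodivisors in
`A`, all elements of `φ(S)` are nonzerodivisors in `B`, and `A/g → B/φ(g)` is an isomorphism
for every `g ∈ G`, then `φ` is an analytic isomorphism along `S`. -/
theorem stmt7 {A B : Type*} [CommRing A] [CommRing B] (φ : A →+* B)
    (S : Submonoid A) (G : Set A) (hgen : Submonoid.closure G = S)
    (hS : ∀ s ∈ S, s ∈ nonZeroDivisors A)
    (hφS : ∀ s ∈ S, φ s ∈ nonZeroDivisors B)
    (hiso : ∀ g ∈ G, Function.Bijective (inducedQuotMap φ g)) :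
    IsAnalyticIsoAlong φ S := by
  subst hgen
  have key : ∀ s ∈ Submonoid.closure G, Function.Bijective (inducedQuotMap φ s) := by
    intro s hs
    induction hs using Submonoid.closure_induction with
    | mem g hg => exact hiso g hg
    | one =>
      rw [inducedQuotMap_bijective_iff]
      exact ⟨fun x _ => one_dvd x, fun b => ⟨0, by simp⟩⟩
    | mul s t hs ht ihs iht =>
      rw [inducedQuotMap_bijective_iff] at *
      refine ⟨fun x hx => ?_, fun b => ?_⟩
      · obtain ⟨c, hc⟩ := hx
        rw [map_mul, mul_assoc] at hc
        obtain ⟨y, rfl⟩ := ihs.1 x ⟨_, hc⟩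
        rw [map_mul] at hc
        have h := (mul_cancel_left_mem_nonZeroDivisors (hφS s hs)).1 hc
        exact mul_dvd_mul_left s (iht.1 y ⟨c, h⟩)
      · obtain ⟨a, c, hc⟩ := ihs.2 b
        obtain ⟨a', d, hd⟩ := iht.2 c
        refine ⟨a + s * a', d, ?_⟩
        simp only [map_add, map_mul]
        linear_combination hc + φ s * hd
  refine ⟨key, fun a b hab => ?_⟩
  have hA : Function.Injective
      (algebraMap A (Localization (Submonoid.closure G))) :=
    IsLocalization.injective _ hS
  have hB : Function.Injective
      (algebraMap B (Localization ((Submonoid.closure G).map φ))) := by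
    refine IsLocalization.injective (M := (Submonoid.closure G).map φ) _ ?_
    rintro _ ⟨s, hs, rfl⟩
    exact hφS s hs
  obtain ⟨⟨x, s⟩, hx⟩ := IsLocalization.surj (Submonoid.closure G) a
  simp only at hx
  have hmap : ∀ y, inducedLocMap φ (Submonoid.closure G) (algebraMap A _ y)
      = algebraMap B _ (φ y) := fun y => IsLocalization.map_eq _ y
  have h1 : b * φ s = φ x := by
    apply hB
    rw [map_mul, ← hab, ← hmap, ← hmap, ← map_mul, hx]
  obtain ⟨y, rfl⟩ := ((inducedQuotMap_bijective_iff φ _).1 (key s s.2)).1 x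
    ⟨b, by rw [← h1, mul_comm]⟩
  refine ⟨y, ⟨?_, ?_⟩, fun z hz => hA ?_⟩
  · apply (IsLocalization.map_units (Localization (Submonoid.closure G)) s).mul_right_cancel
    rw [hx, map_mul, mul_comm]
  · apply (mul_cancel_left_mem_nonZeroDivisors (hφS s s.2)).1
    rw [← map_mul, ← h1, mul_comm]
  · rw [hz.1]
    apply (IsLocalization.map_units (Localization (Submonoid.closure G)) s).mul_right_cancel
    rw [hx, map_mul, mul_comm]
end

section
/- Let φ : A → B be a homomorphism of commutative rings, let u, v ∈ A and set s = uv. If the induced map A/s → B/φ(s) is an isomorphism, then the induced maps A/u → B/φ(u) and A/v → B/φ(v) are isomorphisms as well. -/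
theorem inducedQuotMap_bij_iff {A B : Type*} [CommRing A] [CommRing B] (φ : A →+* B) (f : A) :
    Function.Bijective (inducedQuotMap φ f) ↔
      (∀ a, φ f ∣ φ a → f ∣ a) ∧ (∀ b, ∃ a, φ f ∣ φ a - b) := by
  unfold Function.Bijective
  refine and_congr ?_ ?_
  · rw [injective_iff_map_eq_zero]
    constructor
    · intro h a ha
      have := h (Ideal.Quotient.mk _ a) (by
        simp only [inducedQuotMap, Ideal.quotientMap_mk]
        rw [Ideal.Quotient.eq_zero_iff_mem, Ideal.mem_span_singleton]
        exact ha)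
      rwa [Ideal.Quotient.eq_zero_iff_mem, Ideal.mem_span_singleton] at this
    · intro h x hx
      obtain ⟨a, rfl⟩ := Ideal.Quotient.mk_surjective x
      simp only [inducedQuotMap, Ideal.quotientMap_mk] at hx
      rw [Ideal.Quotient.eq_zero_iff_mem, Ideal.mem_span_singleton] at hx ⊢
      exact h a hx
  · constructor
    · intro h b
      obtain ⟨x, hx⟩ := h (Ideal.Quotient.mk _ b)
      obtain ⟨a, rfl⟩ := Ideal.Quotient.mk_surjective x
      simp only [inducedQuotMap, Ideal.quotientMap_mk] at hx
      rw [Ideal.Quotient.eq, Ideal.mem_span_singleton] at hx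
      exact ⟨a, hx⟩
    · intro h y
      obtain ⟨b, rfl⟩ := Ideal.Quotient.mk_surjective y
      obtain ⟨a, ha⟩ := h b
      refine ⟨Ideal.Quotient.mk _ a, ?_⟩
      simp only [inducedQuotMap, Ideal.quotientMap_mk]
      rw [Ideal.Quotient.eq, Ideal.mem_span_singleton]
      exact ha

theorem inducedQuotMap_bij_left {A B : Type*} [CommRing A] [CommRing B] (φ : A →+* B) (u v : A)
    (h : Function.Bijective (inducedQuotMap φ (u * v))) :
    Function.Bijective (inducedQuotMap φ u) := by
  rw [inducedQuotMap_bij_iff] at h ⊢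
  obtain ⟨hi, hs⟩ := h
  constructor
  · rintro a ⟨b, hb⟩
    obtain ⟨c, d, hd⟩ := hs b
    have h1 : u * v ∣ a - u * c := hi _ ⟨- (φ u * d), by
      rw [map_sub, map_mul φ u c, hb]
      linear_combination (-φ u) * hd⟩
    have h2 : u ∣ a - u * c := (Dvd.intro v rfl).trans h1
    exact (dvd_sub_left (Dvd.intro c rfl)).1 h2
  · intro b
    obtain ⟨a, ha⟩ := hs b
    exact ⟨a, (map_dvd φ (Dvd.intro v rfl)).trans ha⟩

/-- If the induced map `A/uv → B/φ(uv)` is an isomorphism, then so are the induced maps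
`A/u → B/φ(u)` and `A/v → B/φ(v)`. -/
theorem stmt8 {A B : Type*} [CommRing A] [CommRing B] (φ : A →+* B) (u v : A)
    (h : Function.Bijective (inducedQuotMap φ (u * v))) :
    Function.Bijective (inducedQuotMap φ u) ∧ Function.Bijective (inducedQuotMap φ v) := by
  exact ⟨inducedQuotMap_bij_left φ u v h, inducedQuotMap_bij_left φ v u (mul_comm u v ▸ h)⟩
end

section
/- Let R be a commutative ring, I ⊆ R an ideal, and let f(t) = a₀ + a₁t + … + a_n tⁿ ∈ R[t] be a polynomial with a₀ ∈ I and a₁ a unit of R, and let g(t) ∈ R[t] satisfy g(0) = 1. Let R′ := (R[t]/f)_g be the localization of R[t]/(f) at the image of g, and assume that the images in R′ of the formal derivative f′(t) and of the unique polynomial f̃(t) with f(t) − a₀ = t·f̃(t) are units of R′. Then for every k ≥ 1 the induced ring homomorphism R/Iᵏ → R′/IᵏR′ is an isomorphism. -/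
/-- The ring `R′ = (R[t]/f)_g`: the localization of `R[t]/(f)` at (the image of) `g`. -/
abbrev LHomRing (R : Type*) [CommRing R] (f g : Polynomial R) : Type _ :=
  Localization.Away (Ideal.Quotient.mk (Ideal.span {f}) g)

/-- The canonical homomorphism `R[t] → R′ = (R[t]/f)_g`. -/
noncomputable def lhomPoly (R : Type*) [CommRing R] (f g : Polynomial R) :
    Polynomial R →+* LHomRing R f g :=
  (algebraMap (Polynomial R ⧸ Ideal.span {f}) (LHomRing R f g)).comp
    (Ideal.Quotient.mk (Ideal.span {f}))

/-- The structural homomorphism `R → R′ = (R[t]/f)_g`. -/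
noncomputable def lhomBase (R : Type*) [CommRing R] (f g : Polynomial R) :
    R →+* LHomRing R f g :=
  (lhomPoly R f g).comp Polynomial.C

theorem lhom_existsUnique_root {R S : Type*} [CommRing R] [CommRing S] (q : R →+* S)
    (P : Polynomial R) (h : IsNilpotent (q (P.coeff 0))) (h' : IsUnit (q (P.coeff 1))) :
    ∃! r, IsNilpotent r ∧ P.eval₂ q r = 0 := by
  let _ := q.toAlgebra
  have key := Polynomial.existsUnique_nilpotent_sub_and_aeval_eq_zero (P := P) (x := (0 : S))
    (by rw [← Polynomial.coeff_zero_eq_aeval_zero']; exact h)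
    (by rw [← Polynomial.coeff_zero_eq_aeval_zero', Polynomial.coeff_derivative]
        have h1 : algebraMap R S = q := rfl
        simpa [h1] using h')
  have h1 : algebraMap R S = q := rfl
  simpa only [h1, zero_sub, isNilpotent_neg_iff, Polynomial.aeval_def] using key

/-- For an L-homomorphism `R → R′ = (R[t]/f)_g` along an ideal `I` (so `f` has constant
coefficient in `I`, degree-one coefficient a unit, `g(0) = 1`, and both `f′` and the polynomial
`f̃` with `f − f(0) = t·f̃` become units in `R′`), the induced map `R/Iᵏ → R′/IᵏR′` is an
isomorphism for every `k ≥ 1`. -/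
theorem stmt9 (R : Type*) [CommRing R] (I : Ideal R) (f g : Polynomial R)
    (ha0 : f.coeff 0 ∈ I) (ha1 : IsUnit (f.coeff 1)) (hg : g.eval 0 = 1)
    (hder : IsUnit (lhomPoly R f g (Polynomial.derivative f)))
    (hdivX : IsUnit (lhomPoly R f g f.divX))
    (k : ℕ) (hk : 1 ≤ k) :
    Function.Bijective
      (Ideal.quotientMap ((I ^ k).map (lhomBase R f g)) (lhomBase R f g)
        Ideal.le_comap_map) := by
  set K : Ideal (LHomRing R f g) := (I ^ k).map (lhomBase R f g) with hK
  set π : R →+* R ⧸ I ^ k := Ideal.Quotient.mk (I ^ k) with hπ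
  set ρ : LHomRing R f g →+* LHomRing R f g ⧸ K := Ideal.Quotient.mk K with hρ
  set Φ : R ⧸ I ^ k →+* LHomRing R f g ⧸ K :=
    Ideal.quotientMap K (lhomBase R f g) Ideal.le_comap_map with hΦ
  have hΦπ : ∀ r, Φ (π r) = ρ (lhomBase R f g r) := fun r => Ideal.quotientMap_mk
  have hnil : IsNilpotent (π (f.coeff 0)) := by
    refine ⟨k, ?_⟩
    rw [← map_pow]
    exact Ideal.Quotient.eq_zero_iff_mem.mpr (Ideal.pow_mem_pow ha0 k)
  obtain ⟨α, ⟨hα, hfα⟩, -⟩ := lhom_existsUnique_root π f hnil (ha1.map π)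
  have hgα : IsUnit (g.eval₂ π α) := by
    have h0 : g.eval₂ π α = g.divX.eval₂ π α * α + 1 := by
      conv_lhs => rw [← Polynomial.divX_mul_X_add g]
      rw [Polynomial.eval₂_add, Polynomial.eval₂_mul_X, Polynomial.eval₂_C,
        Polynomial.coeff_zero_eq_eval_zero, hg, map_one]
    rw [h0]
    exact ((Commute.all _ _).isNilpotent_mul_left hα).isUnit_add_one
  let φ₀ : Polynomial R ⧸ Ideal.span {f} →+* R ⧸ I ^ k :=
    Ideal.Quotient.lift _ (Polynomial.eval₂RingHom π α) (by
      intro a ha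
      obtain ⟨c, rfl⟩ := Ideal.mem_span_singleton'.mp ha
      rw [map_mul, Polynomial.coe_eval₂RingHom, hfα, mul_zero])
  have hu : IsUnit (φ₀ (Ideal.Quotient.mk (Ideal.span {f}) g)) := hgα
  let φ : LHomRing R f g →+* R ⧸ I ^ k := IsLocalization.Away.lift _ hu
  have hφ : ∀ p, φ (lhomPoly R f g p) = p.eval₂ π α := fun p =>
    IsLocalization.Away.lift_eq _ hu _
  have hφb : ∀ r, φ (lhomBase R f g r) = π r := fun r => by
    simp [lhomBase, hφ]
  have hφK : ∀ a ∈ K, φ a = 0 := by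
    have : K ≤ RingHom.ker φ := by
      rw [hK, Ideal.map_le_iff_le_comap]
      intro r hr
      rw [Ideal.mem_comap, RingHom.mem_ker, hφb]
      exact Ideal.Quotient.eq_zero_iff_mem.mpr hr
    exact this
  let Ψ : LHomRing R f g ⧸ K →+* R ⧸ I ^ k := Ideal.Quotient.lift K φ hφK
  have hΨ : ∀ a, Ψ (ρ a) = φ a := fun a => rfl
  -- the class of `t` equals the image of `α`
  have hpoly : ∀ p, p.eval₂ (ρ.comp (lhomBase R f g)) (ρ (lhomPoly R f g Polynomial.X)) =
      ρ (lhomPoly R f g p) := by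
    intro p
    have : Polynomial.eval₂RingHom (ρ.comp (lhomBase R f g)) (ρ (lhomPoly R f g Polynomial.X)) =
        ρ.comp (lhomPoly R f g) := by
      apply Polynomial.ringHom_ext
      · intro a; simp [lhomBase]
      · simp
    exact RingHom.congr_fun this p
  have hf0 : lhomPoly R f g f = 0 := by
    have : Ideal.Quotient.mk (Ideal.span {f}) f = 0 :=
      Ideal.Quotient.eq_zero_iff_mem.mpr (Ideal.mem_span_singleton_self f)
    rw [lhomPoly, RingHom.comp_apply, this, map_zero]
  have hnilQ : IsNilpotent (ρ (lhomBase R f g (f.coeff 0))) := by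
    rw [← hΦπ]; exact hnil.map Φ
  have hX : ρ (lhomPoly R f g Polynomial.X) = Φ α := by
    refine (lhom_existsUnique_root (ρ.comp (lhomBase R f g)) f hnilQ
      (ha1.map _)).unique ⟨?_, ?_⟩ ⟨hα.map Φ, ?_⟩
    · have h1 : ρ (lhomPoly R f g f.divX) * ρ (lhomPoly R f g Polynomial.X) =
          - ρ (lhomBase R f g (f.coeff 0)) := by
        rw [eq_neg_iff_add_eq_zero, lhomBase, RingHom.comp_apply, ← map_mul, ← map_mul,
          ← map_add, ← map_add, Polynomial.divX_mul_X_add, hf0, map_zero]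
      obtain ⟨u, hu'⟩ := hdivX.map ρ
      have h2 : ρ (lhomPoly R f g Polynomial.X) =
          ↑u⁻¹ * - ρ (lhomBase R f g (f.coeff 0)) := by
        rw [← h1, ← hu', Units.inv_mul_cancel_left]
      rw [h2]
      exact (Commute.all _ _).isNilpotent_mul_left hnilQ.neg
    · rw [hpoly, hf0, map_zero]
    · have : ρ.comp (lhomBase R f g) = Φ.comp π := RingHom.ext fun r => (hΦπ r).symm
      rw [this, ← Polynomial.hom_eval₂, hfα, map_zero]
  have hid : Φ.comp Ψ = RingHom.id _ := by
    apply Ideal.Quotient.ringHom_ext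
    apply IsLocalization.ringHom_ext
      (Submonoid.powers (Ideal.Quotient.mk (Ideal.span {f}) g))
    apply Ideal.Quotient.ringHom_ext
    apply Polynomial.ringHom_ext
    · intro a
      change Φ (φ (lhomBase R f g a)) = ρ (lhomBase R f g a)
      rw [hφb, hΦπ]
    · change Φ (φ (lhomPoly R f g Polynomial.X)) = ρ (lhomPoly R f g Polynomial.X)
      rw [hφ, hX, Polynomial.eval₂_X]
  refine Function.bijective_iff_has_inverse.mpr ⟨Ψ, ?_, fun x => RingHom.congr_fun hid x⟩
  intro x
  obtain ⟨r, rfl⟩ := Ideal.Quotient.mk_surjective x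
  change Ψ (Φ (π r)) = π r
  rw [hΦπ, hΨ, hφb]
end

section
/- Let A be a commutative ring with Jacobson radical J, let f(x) = xⁿ + a_{n−1}x^{n−1} + … + a₁x + a₀ ∈ A[x] be a monic polynomial all of whose coefficients a₀,…,a_{n−1} lie in J, and let g ∈ 1 + xA[x] (i.e. g has constant coefficient 1). Then f and g generate the unit ideal of A[x]. -/
/-- Top-Bottom Lemma: if `f` is a monic polynomial all of whose lower coefficients lie in the
Jacobson radical of `A`, and `g` has constant coefficient `1`, then `f` and `g` generate the
unit ideal of `A[x]`. -/
theorem stmt10 (A : Type*) [CommRing A] (f g : Polynomial A) (hf : f.Monic)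
    (hcoeff : ∀ i < f.natDegree, f.coeff i ∈ (⊥ : Ideal A).jacobson)
    (hg : g.coeff 0 = 1) :
    IsCoprime f g := by
  rw [← Ideal.isCoprime_span_singleton_iff, Ideal.isCoprime_iff_sup_eq]
  by_contra hne
  obtain ⟨M, hM, hle⟩ := Ideal.exists_le_maximal _ hne
  have hfM : f ∈ M := hle (Ideal.mem_sup_left (Ideal.mem_span_singleton_self f))
  have hgM : g ∈ M := hle (Ideal.mem_sup_right (Ideal.mem_span_singleton_self g))
  let φ : A →+* (Polynomial A ⧸ M) := (Ideal.Quotient.mk M).comp Polynomial.C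
  have hX : φ.IsIntegralElem (Ideal.Quotient.mk M Polynomial.X) := by
    refine ⟨f, hf, ?_⟩
    rw [← Polynomial.hom_eval₂, Polynomial.eval₂_C_X]
    exact Ideal.Quotient.eq_zero_iff_mem.mpr hfM
  have hint : φ.IsIntegral := by
    intro y
    obtain ⟨p, rfl⟩ := Ideal.Quotient.mk_surjective y
    induction p using Polynomial.induction_on' with
    | add p q hp hq => rw [map_add]; exact hp.add φ hq
    | monomial n a =>
      rw [← Polynomial.C_mul_X_pow_eq_monomial, map_mul, map_pow]
      refine RingHom.IsIntegralElem.mul φ (φ.isIntegralElem_map (x := a)) ?_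
      induction n with
      | zero => rw [pow_zero]; exact φ.isIntegralElem_one
      | succ n ih => rw [pow_succ]; exact ih.mul φ hX
  letI : Field (Polynomial A ⧸ M) := Ideal.Quotient.field M
  have hmax : (Ideal.comap φ ⊥).IsMaximal :=
    Ideal.isMaximal_comap_of_isIntegral_of_isMaximal' φ hint ⊥
  have hJ : ∀ a ∈ (⊥ : Ideal A).jacobson, Polynomial.C a ∈ M := by
    intro a ha
    have h1 : a ∈ Ideal.comap φ ⊥ := (Ideal.mem_sInf.mp ha) ⟨bot_le, hmax⟩
    exact Ideal.Quotient.eq_zero_iff_mem.mp h1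
  have hXM : Polynomial.X ∈ M := by
    apply hM.isPrime.mem_of_pow_mem f.natDegree
    have h2 := hf.as_sum
    have h3 : ∑ i ∈ Finset.range f.natDegree,
        Polynomial.C (f.coeff i) * Polynomial.X ^ i ∈ M :=
      M.sum_mem fun i hi => M.mul_mem_right _ (hJ _ (hcoeff i (Finset.mem_range.mp hi)))
    rw [h2] at hfM
    exact (M.add_mem_iff_left h3).mp hfM
  apply hM.ne_top
  rw [Ideal.eq_top_iff_one]
  have h4 := Polynomial.divX_mul_X_add g
  rw [hg, Polynomial.C_1] at h4
  rw [← h4] at hgM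
  exact (M.add_mem_iff_right (M.mul_mem_left _ hXM)).mp hgM
end

section
/- Let A be a commutative ring, let I ⊆ A be an ideal contained in the Jacobson radical of A, let r ≥ 2, and let σ ∈ SL_r(A). If the image of σ in SL_r(A/I) lies in the elementary subgroup E_r(A/I), then σ lies in E_r(A). -/
open Matrix

/-- The elementary subgroup `E_r(A) ⊆ SL_r(A)`: the subgroup generated by the elementary
matrices `e_{ij}(a) = 1 + a·E_{ij}` for `i ≠ j` and `a ∈ A`. -/
def elementarySubgroup (r : ℕ) (A : Type*) [CommRing A] :
    Subgroup (SpecialLinearGroup (Fin r) A) :=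
  Subgroup.closure {σ | ∃ (i j : Fin r) (a : A), i ≠ j ∧
    (σ : Matrix (Fin r) (Fin r) A) = Matrix.transvection i j a}

/-- Elementary matrices as elements of the special linear group. -/
def elemSL {r : ℕ} {A : Type*} [CommRing A] (i j : Fin r) (h : i ≠ j) (c : A) :
    SpecialLinearGroup (Fin r) A :=
  ⟨Matrix.transvection i j c, Matrix.det_transvection_of_ne i j h c⟩

theorem elemSL_mem {r : ℕ} {A : Type*} [CommRing A] (i j : Fin r) (h : i ≠ j) (c : A) :
    elemSL i j h c ∈ elementarySubgroup r A :=
  Subgroup.subset_closure ⟨i, j, c, h, rfl⟩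

theorem elemSL_mul {r : ℕ} {A : Type*} [CommRing A] (i j : Fin r) (h : i ≠ j) (c : A)
    (σ : SpecialLinearGroup (Fin r) A) (a b : Fin r) :
    (elemSL i j h c * σ) a b = if a = i then σ i b + c * σ j b else σ a b := by
  have e : (elemSL i j h c * σ) a b = (Matrix.transvection i j c * σ.1) a b := rfl
  rw [e]
  split_ifs with hh
  · subst hh
    exact Matrix.transvection_mul_apply_same _ _ _ _ _
  · exact Matrix.transvection_mul_apply_of_ne _ _ _ _ hh _ _

theorem clear_aux {r : ℕ} {A : Type*} [CommRing A] (k : Fin r)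
    (σ : SpecialLinearGroup (Fin r) A) (T : Finset (Fin r)) :
    k ∉ T → ∃ e ∈ elementarySubgroup r A, ∀ i j,
      (e * σ) i j = if i ∈ T then σ i j - σ i k * σ k j else σ i j := by
  induction T using Finset.induction_on with
  | empty => intro _; exact ⟨1, one_mem _, by simp⟩
  | insert a T ha ih =>
    intro hk
    rw [Finset.mem_insert, not_or] at hk
    obtain ⟨e, he, hE⟩ := ih hk.2
    refine ⟨elemSL a k (Ne.symm hk.1) (-σ a k) * e, mul_mem (elemSL_mem _ _ _ _) he, ?_⟩
    intro i j
    rw [mul_assoc, elemSL_mul, hE, hE, hE, if_neg ha, if_neg hk.2]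
    by_cases hi : i = a
    · subst hi
      simp
      ring
    · simp [hi]

theorem main_aux {r : ℕ} {A : Type*} [CommRing A] (I : Ideal A)
    (hI : I ≤ (⊥ : Ideal A).jacobson) (T : Finset (Fin r)) :
    ∀ σ : SpecialLinearGroup (Fin r) A,
      (∀ i j, σ i j - (1 : Matrix (Fin r) (Fin r) A) i j ∈ I) →
      (∀ k ∉ T, ∀ j, σ j k = (1 : Matrix (Fin r) (Fin r) A) j k) →
      σ ∈ elementarySubgroup r A := by
  induction T using Finset.induction_on with
  | empty =>
    intro σ _ h
    have : σ = 1 := by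
      ext i j
      exact h j (by simp) i
    rw [this]
    exact one_mem _
  | insert k T hk ih =>
    -- the case where the pivot is already `1`
    have key : ∀ σ : SpecialLinearGroup (Fin r) A,
        (∀ i j, σ i j - (1 : Matrix (Fin r) (Fin r) A) i j ∈ I) →
        (∀ l ∉ insert k T, ∀ j, σ j l = (1 : Matrix (Fin r) (Fin r) A) j l) →
        σ k k = 1 → σ ∈ elementarySubgroup r A := by
      intro σ hc hS hkk
      obtain ⟨e, he, hE⟩ := clear_aux k σ (Finset.univ.erase k) (by simp)
      have hmem : e * σ ∈ elementarySubgroup r A := by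
        apply ih
        · intro i j
          rw [hE]
          split_ifs with hi
          · have hik : i ≠ k := by simpa using hi
            have h1 : σ i k ∈ I := by
              have := hc i k
              rwa [Matrix.one_apply_ne hik, sub_zero] at this
            have h2 := I.sub_mem (hc i j) (I.mul_mem_right (σ k j) h1)
            convert h2 using 1
            ring
          · exact hc i j
        · intro l hl j
          rw [hE]
          by_cases hlk : l = k
          · subst hlk
            by_cases hj : j = l
            · subst hj; simp [hkk]
            · simp [hj, hkk, Matrix.one_apply_ne hj]
          · have hl' := hS l (by simp [hlk, hl])
            rw [hl', hl', Matrix.one_apply_ne (Ne.symm hlk)]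
            simp
      exact (Subgroup.mul_mem_cancel_left _ he).1 hmem
    intro σ hc hS
    rcases T.eq_empty_or_nonempty with hT | ⟨k', hk'⟩
    · apply key σ hc hS
      have hu : σ.1 = Matrix.updateCol 1 k (fun i => σ i k) := by
        ext i j
        by_cases hj : j = k
        · subst hj; simp
        · rw [Matrix.updateCol_ne hj]
          exact hS j (by simp [hj, hT]) i
      have hd := σ.2
      rw [hu, ← Matrix.cramer_apply, Matrix.cramer_one] at hd
      simpa using hd
    · have hne : k ≠ k' := fun h => hk (h ▸ hk')
      have hx : IsUnit (σ k k + σ k' k) := by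
        have h1 := hc k k
        have h2 := hc k' k
        rw [Matrix.one_apply_eq] at h1
        rw [Matrix.one_apply_ne hne.symm, sub_zero] at h2
        have h3 := Ideal.mem_jacobson_bot.1 (hI (I.add_mem h1 h2)) 1
        convert h3 using 1
        ring
      obtain ⟨y, hy⟩ := hx.exists_right_inv
      set t := y * (1 - σ k k) with ht
      have htI : t ∈ I := by
        apply I.mul_mem_left
        have h1 := hc k k
        rw [Matrix.one_apply_eq] at h1
        rw [← neg_sub]
        exact I.neg_mem h1
      set e := elemSL k' k hne.symm (-1 : A) * (elemSL k k' hne t * elemSL k' k hne.symm 1)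
        with he
      have hemem : e ∈ elementarySubgroup r A :=
        mul_mem (elemSL_mem _ _ _ _) (mul_mem (elemSL_mem _ _ _ _) (elemSL_mem _ _ _ _))
      have hE : ∀ i j, (e * σ) i j = if i = k then σ k j + t * (σ k j + σ k' j) else
          if i = k' then σ k' j - t * (σ k j + σ k' j) else σ i j := by
        intro i j
        rw [he, mul_assoc, mul_assoc]
        simp only [elemSL_mul]
        by_cases h1 : i = k
        · subst h1; simp [hne]; ring
        · by_cases h2 : i = k'
          · subst h2; simp [h1, hne]; ring
          · simp [h1, h2]
      refine (Subgroup.mul_mem_cancel_left _ hemem).1 (key (e * σ) ?_ ?_ ?_)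
      · intro i j
        have hm := I.mul_mem_right (σ k j + σ k' j) htI
        rw [hE]
        split_ifs with h1 h2
        · subst h1
          convert I.add_mem (hc i j) hm using 1
          ring
        · subst h2
          convert I.sub_mem (hc i j) hm using 1
          ring
        · exact hc i j
      · intro l hl j
        have hl' := hS l hl
        rw [Finset.mem_insert, not_or] at hl
        have hlk' : k' ≠ l := fun h => hl.2 (h ▸ hk')
        rw [hE, hl', hl', hl', Matrix.one_apply_ne (Ne.symm hl.1), Matrix.one_apply_ne hlk']
        split_ifs with h1 h2
        · subst h1; simp [Matrix.one_apply_ne (Ne.symm hl.1)]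
        · subst h2; simp [Matrix.one_apply_ne hlk']
        · rfl
      · rw [hE, if_pos rfl, ht]
        linear_combination (1 - σ k k) * hy

theorem lift_aux {A : Type*} [CommRing A] (I : Ideal A) (r : ℕ) :
    elementarySubgroup r (A ⧸ I) ≤
      (elementarySubgroup r A).map (SpecialLinearGroup.map (Ideal.Quotient.mk I)) := by
  unfold elementarySubgroup
  rw [Subgroup.closure_le]
  rintro τ ⟨i, j, a, hij, hτ⟩
  obtain ⟨a, rfl⟩ := Ideal.Quotient.mk_surjective a
  refine ⟨elemSL i j hij a, elemSL_mem i j hij a, ?_⟩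
  apply Subtype.ext
  rw [hτ]
  ext p q
  change Ideal.Quotient.mk I (Matrix.transvection i j a p q) = _
  simp only [Matrix.transvection, Matrix.add_apply, Matrix.single_apply, Matrix.one_apply, map_add]
  split_ifs <;> simp

/-- If `I` is an ideal contained in the Jacobson radical of `A` and `σ ∈ SL_r(A)` becomes
elementary modulo `I`, then `σ` is elementary. -/
theorem stmt14 (A : Type*) [CommRing A] (I : Ideal A) (hI : I ≤ (⊥ : Ideal A).jacobson)
    (r : ℕ) (hr : 2 ≤ r) (σ : SpecialLinearGroup (Fin r) A)
    (h : SpecialLinearGroup.map (Ideal.Quotient.mk I) σ ∈ elementarySubgroup r (A ⧸ I)) :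
    σ ∈ elementarySubgroup r A := by
  obtain ⟨e, he, hE⟩ := lift_aux I r h
  refine (Subgroup.mul_mem_cancel_left _ (inv_mem he)).1
    (main_aux I hI Finset.univ (e⁻¹ * σ) ?_ (by simp))
  have h1 : SpecialLinearGroup.map (Ideal.Quotient.mk I) (e⁻¹ * σ) = 1 := by
    rw [map_mul, map_inv, hE, inv_mul_cancel]
  intro i j
  rw [← Ideal.Quotient.eq]
  have h2 := congrArg (fun M : SpecialLinearGroup (Fin r) (A ⧸ I) => M.1 i j) h1
  have h3 : (Ideal.Quotient.mk I) ((e⁻¹ * σ) i j) = (1 : Matrix (Fin r) (Fin r) (A ⧸ I)) i j := h2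
  rw [h3]
  simp only [Matrix.one_apply]
  split_ifs <;> simp
end
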